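/- For every primary prime π ∈ ℤ[i] (so π ≡ 1 (mod (1+i)³)), the quadratic Gauss sum satisfies g(π) = (−1/π)₄ · N(π)^{1/2}. -/

import Mathlib

/-!
Reducing modulo `π`, the quadratic residue symbol becomes the quadratic character of the residue
field, and `ẽ(z/π) = exp(2πi Im(z/π))` becomes an additive character of it. A primary `π` has even
imaginary part and norm `N ≡ 1 (mod 4)`, and `N` is either a rational prime `p` or `p²`.

If `N = p` and `π = a + bi`, then `ℤ[i]/(π) ≅ ℤ/p` and `g(π) = (-b/p) τ(p)`, where `τ(p)` is the
classical quadratic Gauss sum. Gauss's theorem `τ(p) = √p` is obtained in `gauss_limit` from the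
behaviour of the Jacobi theta series near a rational point (the Landsberg–Schaar argument). From
`p = a² + b²`, Jacobi reciprocity applied to the odd part of `b` and the supplementary law for `2`
give `(-b/p) = (-1)^((p-1)/4) = (-1/π)₄`; this is `legendre_im`.

If `N = p²`, then `π = ±p`. The quadratic character of the field with `p²` elements is trivial on
nonzero elements of the prime field, so the Gauss sum is invariant under scaling the additive
character by these. Averaging over the scalings gives `g(π) = p` (`gauss_inert`), and
`(-1/π)₄ = 1` because `8 ∣ p² - 1`.
-/

open Complex GaussianInt MeasureTheory Asymptotics Filter
open scoped ComplexConjugate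

noncomputable section

/-- The element `i` of `ℤ[i]`. -/
def gi : GaussianInt := ⟨0, 1⟩

/-- The norm `N(a+bi) = a² + b²` of a Gaussian integer, as a natural number. -/
def gnorm (a : GaussianInt) : ℕ := a.norm.natAbs

/-- An element of `ℤ[i]` is primary if it is `≡ 1 (mod (1+i)³)`. -/
def IsPrimary (a : GaussianInt) : Prop := (1 + gi) ^ 3 ∣ a - 1

/-- `c ≡ 1 (mod 16)` in `ℤ[i]`. -/
def ModOne16 (c : GaussianInt) : Prop := (16 : GaussianInt) ∣ c - 1

open scoped Classical in
/-- The quartic residue symbol `(a/π)₄` for a prime `π` of odd norm: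
the unique unit `u ∈ {±1, ±i}` with `a^((N(π)-1)/4) ≡ u (mod π)` if it exists
(i.e. when `π ∤ a`), and `0` otherwise. -/
def quarticSymbolPrime (a π : GaussianInt) : GaussianInt :=
  if h : ∃ u : GaussianInt, IsUnit u ∧ π ∣ a ^ ((gnorm π - 1) / 4) - u then h.choose else 0

/-- The quartic residue symbol `(a/n)₄`, extended multiplicatively in the lower entry
(via a prime factorization of `n`; each prime factor's symbol only depends on its
associate class, so this is well defined). -/
def quarticSymbol (a n : GaussianInt) : GaussianInt :=
  ((UniqueFactorizationMonoid.factors n).map fun π => quarticSymbolPrime a π).prod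

/-- The quadratic residue symbol `(a/n) = ((a/n)₄)²`. -/
def quadSymbol (a n : GaussianInt) : GaussianInt := quarticSymbol a n ^ 2

/-- A generator of an ideal of the principal ideal domain `ℤ[i]`. -/
def idealGen (A : Ideal GaussianInt) : GaussianInt := Submodule.IsPrincipal.generator A

/-- The absolute norm of an ideal of `ℤ[i]`. -/
def idealNorm (A : Ideal GaussianInt) : ℕ := gnorm (idealGen A)

/-- The quadratic Hecke character `χ_c`, as a function of nonzero integral ideals:
`χ_c(A) = (α/c)` for a generator `α` of `A` (for square-free `c ≡ 1 (mod 16)` this is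
independent of the generator, since `χ_c` is trivial on units). -/
def heckeChar (c : GaussianInt) (A : Ideal GaussianInt) : ℂ :=
  toComplex (quadSymbol (idealGen A) c)

/-- Predicate expressing that `L : ℂ → ℂ` is the analytic continuation of the
Hecke `L`-function `L(s, χ_c)`: it is given by the Dirichlet series
`Σ_{0 ≠ A} χ_c(A) N(A)^{-s}` for `Re(s) > 1` and is differentiable away from `s = 1`
(at `s = 1` the principal character gives the Dedekind zeta function, which has a pole). -/
def IsHeckeL (c : GaussianInt) (L : ℂ → ℂ) : Prop :=
  (∀ s : ℂ, 1 < s.re → HasSum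
      (fun A : {A : Ideal GaussianInt // A ≠ ⊥} =>
        heckeChar c A.1 * (idealNorm A.1 : ℂ) ^ (-s)) (L s)) ∧
  ∀ s : ℂ, s ≠ 1 → DifferentiableAt ℂ L s

/-- The constant `A = ∏_{π prime, (π,2)=1} (1 - 1/((N(π)+1)N(π)))`, the product running
over the odd primes of `ℤ[i]` (equivalently, over odd nonzero prime ideals). -/
def eulerConstA : ℝ :=
  ∏' P : {P : Ideal GaussianInt // P.IsPrime ∧ P ≠ ⊥ ∧ (2 : GaussianInt) ∉ P},
    (1 - ((idealNorm P.1 + 1) * (idealNorm P.1) : ℝ)⁻¹)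

/-- The value `ζ_{ℚ(i)}(2)` of the Dedekind zeta function of `ℚ(i)` at `2`. -/
def zetaQi2 : ℝ := ∑' A : {A : Ideal GaussianInt // A ≠ ⊥}, ((idealNorm A.1 : ℝ) ^ 2)⁻¹

/-- The additive character `ẽ(z) = exp(2πi(z/(2i) - z̄/(2i)))`. -/
def eTilde (z : ℂ) : ℂ :=
  Complex.exp (2 * Real.pi * I * (z / (2 * I) - (conj z) / (2 * I)))

/-- The quadratic Gauss sum `g(n) = Σ_{x mod n} (x/n) ẽ(x/n)` (the sum over the finite
quotient `ℤ[i]/(n)`; each term is independent of the representative chosen). -/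
def quadGaussSum (n : GaussianInt) : ℂ :=
  ∑' x : GaussianInt ⧸ Ideal.span {n},
    toComplex (quadSymbol (Quotient.out x) n) * eTilde (toComplex (Quotient.out x) / toComplex n)

/-- The weight `V(ξ) = (1/2πi)∫_{(2)} (Γ(s+1/2)/Γ(1/2)) ξ^{-s} ds/s`, the contour integral
along the vertical line `Re(s) = 2` (parametrized by `s = 2 + iτ`). -/
def Vweight (ξ : ℝ) : ℂ :=
  (2 * Real.pi)⁻¹ * ∫ τ : ℝ,
    Complex.Gamma ((2 + τ * I) + 1 / 2) / Complex.Gamma (1 / 2) *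
      (ξ : ℂ) ^ (-(2 + τ * I)) / (2 + τ * I)

/-! ### Theta series and the classical quadratic Gauss sum -/

theorem summable_theta {u : ℂ} (hu : 0 < u.re) (x : ℝ) :
    Summable fun n : ℤ => cexp (-Real.pi * u * n ^ 2 + 2 * Real.pi * I * n * x) := by
  have h := (summable_jacobiTheta₂_term_iff (x : ℂ) (I * u)).2 (by simpa using hu)
  refine h.congr fun n => ?_
  rw [jacobiTheta₂_term]
  congr 1
  linear_combination (Real.pi * n ^ 2 * u : ℂ) * I_mul_I

theorem norm_theta_term (u : ℂ) (x : ℝ) (n : ℤ) :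
    ‖cexp (-Real.pi * u * n ^ 2 + 2 * Real.pi * I * n * x)‖ =
      Real.exp (-Real.pi * u.re * n ^ 2) := by
  rw [Complex.norm_exp]
  congr 1
  have h1 : (-Real.pi * u * n ^ 2 + 2 * Real.pi * I * n * x : ℂ) =
      ((-Real.pi * n ^ 2 : ℝ) : ℂ) * u + ((2 * Real.pi * n * x : ℝ) : ℂ) * I := by
    push_cast; ring
  rw [h1, add_re, re_ofReal_mul, re_ofReal_mul, I_re]
  ring

/-- A twisted theta series tends to its `n = 0` term as the real part of the parameter
tends to infinity. -/
theorem tendsto_theta {u : ℝ → ℂ} {l : Filter ℝ} (hu : Tendsto (fun t => (u t).re) l atTop)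
    (x : ℝ) :
    Tendsto (fun t => ∑' n : ℤ, cexp (-Real.pi * u t * n ^ 2 + 2 * Real.pi * I * n * x)) l
      (nhds 1) := by
  have key := tendsto_tsum_of_dominated_convergence (𝓕 := l)
    (f := fun t (n : ℤ) => cexp (-Real.pi * u t * n ^ 2 + 2 * Real.pi * I * n * x))
    (g := fun n : ℤ => if n = 0 then (1 : ℂ) else 0)
    (bound := fun n : ℤ => ‖cexp (-Real.pi * (1 : ℂ) * n ^ 2 + 2 * Real.pi * I * n * x)‖)
    (summable_theta (by simp) x).norm ?_ ?_
  · simpa using key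
  · intro n
    rcases eq_or_ne n 0 with rfl | hn
    · simp [tendsto_const_nhds]
    · simp only [if_neg hn]
      rw [tendsto_zero_iff_norm_tendsto_zero]
      simp_rw [norm_theta_term]
      refine Real.tendsto_exp_atBot.comp ?_
      have hn' : (-Real.pi * (n : ℝ) ^ 2) < 0 := by
        have : (0 : ℝ) < (n : ℝ) ^ 2 := by positivity
        nlinarith [Real.pi_pos]
      refine (hu.const_mul_atTop_of_neg hn').congr fun t => ?_
      ring
  · filter_upwards [hu.eventually_ge_atTop 1] with t ht n
    rw [norm_theta_term, norm_theta_term]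
    refine Real.exp_le_exp.2 ?_
    have : (0 : ℝ) ≤ Real.pi * (n : ℝ) ^ 2 := by positivity
    simp only [one_re]
    nlinarith

/-- Poisson summation for a Gaussian summed over the residue class `r` modulo `q`: the result is
a theta series twisted by the additive character of frequency `r / q`. -/
theorem theta_residue (q : ℕ) (hq : 0 < q) (r : ℕ) {w : ℂ} (hw : 0 < w.re) :
    ∑' m : ℤ, cexp (-Real.pi * w * ((q * m + r : ℤ) : ℂ) ^ 2) =
      1 / ((q : ℂ) ^ 2 * w) ^ (1 / 2 : ℂ) *
        ∑' n : ℤ, cexp (-Real.pi * (1 / ((q : ℂ) ^ 2 * w)) * n ^ 2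
          + 2 * Real.pi * I * n * ((r / q : ℝ) : ℂ)) := by
  have hq0 : (q : ℂ) ≠ 0 := by exact_mod_cast hq.ne'
  have hw0 : w ≠ 0 := by rintro rfl; simp at hw
  have ha : 0 < ((q : ℂ) ^ 2 * w).re := by
    have : ((q : ℂ) ^ 2 * w) = (((q : ℝ) ^ 2 : ℝ) : ℂ) * w := by push_cast; rfl
    rw [this, re_ofReal_mul]
    have : (0 : ℝ) < q := by exact_mod_cast hq
    positivity
  have h := Complex.tsum_exp_neg_quadratic ha (-(w * q * r))
  have e1 : ∀ m : ℤ, cexp (-Real.pi * w * ((q * m + r : ℤ) : ℂ) ^ 2) =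
      cexp (-Real.pi * w * r ^ 2) *
        cexp (-Real.pi * ((q : ℂ) ^ 2 * w) * m ^ 2 + 2 * Real.pi * (-(w * q * r)) * m) := by
    intro m
    rw [← Complex.exp_add]
    congr 1
    push_cast
    ring
  simp_rw [e1]
  rw [tsum_mul_left, h, mul_left_comm, ← tsum_mul_left]
  congr 1
  refine tsum_congr fun n => ?_
  rw [← Complex.exp_add]
  congr 1
  push_cast
  field_simp
  ring_nf
  simp only [I_sq]
  ring

theorem tsum_residue {f : ℤ → ℂ} (hf : Summable f) (N : ℕ) [NeZero N] :
    ∑' n, f n = ∑ r : Fin N, ∑' m : ℤ, f (N * m + (r : ℕ)) := by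
  have hs : Summable fun x : ℤ × Fin N => f ((Int.divModEquiv N).symm x) :=
    (Int.divModEquiv N).symm.summable_iff.2 hf
  rw [← (Int.divModEquiv N).symm.tsum_eq, hs.tsum_prod, ← tsum_fintype (L := .unconditional _), Summable.tsum_comm]
  · refine tsum_congr fun r => tsum_congr fun m => ?_
    simp [Int.divModEquiv, mul_comm]
  · exact hs.prod_symm

/-- Gauss's evaluation of the quadratic exponential sum for `p ≡ 1 (mod 4)`, sign included.
With `a = ε - 2i/p`, the functional equation relates `∑ exp(-π a n²)` to `∑ exp(-π n²/a)`. On the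
left the phase `exp(2πi n²/p)` depends on `n` mod `p`; on the right `1/a = ε v + i p/2` with
`v → p²/4`, so the phase `exp(-πi p n²/2)` depends on `n` mod `2`. Each residue class then
contributes a constant multiple of `ε^(-1/2)` as `ε → 0⁺`; comparing the constants gives the
evaluation. -/
theorem gauss_limit (p : ℕ) (hp : 0 < p) (hp4 : p % 4 = 1) :
    ∑ r : Fin p, cexp (2 * Real.pi * I * (r : ℕ) ^ 2 / p) = Real.sqrt p := by
  have : NeZero p := ⟨hp.ne'⟩
  have hpR : (0 : ℝ) < p := by exact_mod_cast hp
  have hpC : (p : ℂ) ≠ 0 := by exact_mod_cast hp.ne'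
  have hpi : (Real.pi : ℂ) ≠ 0 := by exact_mod_cast Real.pi_ne_zero
  set a : ℝ → ℂ := fun ε => ε - 2 * I / p with ha
  set v : ℝ → ℂ := fun ε => -I * p / (2 * a ε) with hv
  have ha_re : ∀ ε, (a ε).re = ε := fun ε => by
    have : a ε = ε + ((-2 / p : ℝ) : ℂ) * I := by simp only [ha]; push_cast; ring
    rw [this]; simp
  have ha0 : ∀ ε, 0 < ε → a ε ≠ 0 := fun ε hε h => by
    have := ha_re ε; rw [h] at this; simp at this; exact hε.ne this
  -- the parameter that `theta_residue` with `q = 2` attaches to `w = ε v`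
  have hinv : ∀ ε : ℝ, 0 < ε → 1 / ((2 : ℂ) ^ 2 * (ε * v ε)) =
      ((1 / (p ^ 2 * ε) : ℝ) : ℂ) + ((1 / (2 * p) : ℝ) : ℂ) * I := by
    intro ε hε
    have hεC : (ε : ℂ) ≠ 0 := by exact_mod_cast hε.ne'
    have h0 := ha0 ε hε
    simp only [hv]
    have : a ε = ε - 2 * I / p := rfl
    field_simp
    rw [this]
    push_cast
    field_simp
    ring_nf
    simp only [I_sq]
    ring
  have hw_re : ∀ ε : ℝ, 0 < ε → 0 < ((ε : ℂ) * v ε).re := by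
    intro ε hε
    have h1 : 0 < (1 / ((2 : ℂ) ^ 2 * (ε * v ε))).re := by
      rw [hinv ε hε, add_re, ofReal_re, re_ofReal_mul, I_re, mul_zero, add_zero]; positivity
    have h2 : 0 < ((2 : ℂ) ^ 2 * (ε * v ε)).re := by
      rw [one_div, inv_re] at h1
      exact (div_pos_iff_of_pos_right (normSq_pos.2 (by
        rintro h; rw [h] at h1; simp at h1))).1 h1
    have : ((2 : ℂ) ^ 2 * (ε * v ε)) = ((4 : ℝ) : ℂ) * (ε * v ε) := by push_cast; norm_num
    rw [this, re_ofReal_mul] at h2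
    linarith
  set A : ℕ → ℝ → ℂ := fun r ε => ∑' n : ℤ, cexp (-Real.pi * (1 / ((p : ℂ) ^ 2 * ε)) * n ^ 2
          + 2 * Real.pi * I * n * ((r / p : ℝ) : ℂ)) with hA
  set B : ℕ → ℝ → ℂ := fun r ε => ∑' n : ℤ, cexp (-Real.pi * (1 / (((2 : ℕ) : ℂ) ^ 2 * (ε * v ε)))
          * n ^ 2 + 2 * Real.pi * I * n * ((r / (2 : ℕ) : ℝ) : ℂ)) with hB
  have hA_lim : ∀ r, Tendsto (A r) (nhdsWithin 0 (Set.Ioi 0)) (nhds 1) := by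
    intro r
    refine tendsto_theta ?_ _
    have : (fun t : ℝ => (1 / ((p : ℂ) ^ 2 * t)).re) = fun t : ℝ => (1 / (p : ℝ) ^ 2) * t⁻¹ := by
      funext t
      have : (1 / ((p : ℂ) ^ 2 * t)) = (((1 / (p : ℝ) ^ 2) * t⁻¹ : ℝ) : ℂ) := by
        push_cast; field_simp
      rw [this, ofReal_re]
    rw [this]
    exact tendsto_inv_nhdsGT_zero.const_mul_atTop (by positivity)
  have hB_lim : ∀ r, Tendsto (B r) (nhdsWithin 0 (Set.Ioi 0)) (nhds 1) := by
    intro r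
    refine tendsto_theta ?_ _
    have : Tendsto (fun t : ℝ => (1 / (p : ℝ) ^ 2) * t⁻¹) (nhdsWithin 0 (Set.Ioi 0)) atTop :=
      tendsto_inv_nhdsGT_zero.const_mul_atTop (by positivity)
    refine this.congr' ?_
    filter_upwards [self_mem_nhdsWithin] with t ht
    have h := hinv t ht
    rw [show (((2 : ℕ) : ℂ)) = 2 by norm_num, h, add_re, ofReal_re, re_ofReal_mul, I_re, mul_zero, add_zero]
    ring
  -- the functional equation, split into residue classes on both sides
  have hfe : ∀ ε : ℝ, 0 < ε →
      ∑ r : Fin p, cexp (2 * Real.pi * I * (r : ℕ) ^ 2 / p) *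
        (1 / ((p : ℂ) ^ 2 * ε) ^ (1 / 2 : ℂ) * A r ε) =
      1 / (a ε) ^ (1 / 2 : ℂ) * ∑ r : Fin 2, cexp (-Real.pi * I * p / 2 * (r : ℕ) ^ 2) *
        (1 / (((2 : ℕ) : ℂ) ^ 2 * (ε * v ε)) ^ (1 / 2 : ℂ) * B r ε) := by
    intro ε hε
    have hεC : (ε : ℂ) ≠ 0 := by exact_mod_cast hε.ne'
    have h0 := ha0 ε hε
    have hare : 0 < (a ε).re := by rwa [ha_re]
    have h := Complex.tsum_exp_neg_mul_int_sq hare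
    have hwa : 1 / a ε = ε * v ε + I * p / 2 := by
      simp only [hv]
      have : a ε = ε - 2 * I / p := rfl
      field_simp
      rw [this]
      field_simp
      ring_nf
      simp only [I_sq]
      ring
    have hs1 : Summable fun n : ℤ => cexp (-Real.pi * a ε * n ^ 2) := by
      simpa using summable_theta hare 0
    have hs2 : Summable fun n : ℤ => cexp (-Real.pi / a ε * n ^ 2) := by
      have : 0 < (1 / a ε).re := by
        rw [hwa]
        have := hw_re ε hε
        have e : (ε * v ε + I * p / 2 : ℂ) = ε * v ε + ((p / 2 : ℝ) : ℂ) * I := by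
          push_cast; ring
        rw [e, add_re]
        simpa using this
      have := summable_theta this 0
      refine this.congr fun n => ?_
      congr 1
      push_cast
      ring
    rw [tsum_residue hs1 p, tsum_residue hs2 2] at h
    convert h using 2
    · rename_i r _
      rw [← theta_residue p hp r (w := ε) (by simpa), ← tsum_mul_left]
      refine tsum_congr fun m => ?_
      rw [← Complex.exp_add, Complex.exp_eq_exp_iff_exists_int]
      refine ⟨-(p * m ^ 2 + 2 * m * r), ?_⟩
      have : a ε = ε - 2 * I / p := rfl
      rw [this]
      push_cast
      field_simp
      ring
    · refine Finset.sum_congr rfl fun r _ => ?_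
      rw [← theta_residue 2 two_pos r (hw_re ε hε), ← tsum_mul_left]
      refine tsum_congr fun m => ?_
      rw [← Complex.exp_add, Complex.exp_eq_exp_iff_exists_int]
      have : -(Real.pi : ℂ) / a ε = -Real.pi * (ε * v ε + I * p / 2) := by
        rw [← hwa]; ring
      rw [this]
      refine ⟨p * (m ^ 2 + m * r), ?_⟩
      push_cast
      ring
  have hmul : ∀ (x : ℝ) (z : ℂ), 0 < x → ((x : ℂ) * z) ^ (1 / 2 : ℂ) =
      (x : ℂ) ^ (1 / 2 : ℂ) * z ^ (1 / 2 : ℂ) := by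
    intro x z hx
    rcases eq_or_ne z 0 with rfl | hz
    · simp
    have hxC : (x : ℂ) ≠ 0 := by exact_mod_cast hx.ne'
    rw [cpow_def_of_ne_zero (mul_ne_zero hxC hz), cpow_def_of_ne_zero hxC, cpow_def_of_ne_zero hz,
      Complex.log_ofReal_mul hx hz, ← Complex.exp_add, Complex.ofReal_log hx.le]
    ring_nf
  have hsq : ∀ x : ℝ, 0 < x → ((x ^ 2 : ℝ) : ℂ) ^ (1 / 2 : ℂ) = x := by
    intro x hx
    rw [one_div, ofReal_pow]
    exact Complex.sq_cpow_two_inv (by simpa)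
  -- cancel the common factor `ε ^ (-1/2)`, so that both sides have limits at `0`
  have hfe2 : ∀ ε : ℝ, 0 < ε →
      ∑ r : Fin p, cexp (2 * Real.pi * I * (r : ℕ) ^ 2 / p) * (1 / p * A r ε) =
      1 / (a ε) ^ (1 / 2 : ℂ) * ∑ r : Fin 2, cexp (-Real.pi * I * p / 2 * (r : ℕ) ^ 2) *
        (1 / (2 * v ε ^ (1 / 2 : ℂ)) * B r ε) := by
    intro ε hε
    have h := hfe ε hε
    have hεC : (ε : ℂ) ^ (1 / 2 : ℂ) ≠ 0 := by
      rw [Ne, cpow_eq_zero_iff]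
      simp [hε.ne']
    rw [show (p : ℂ) ^ 2 = (((p : ℝ) ^ 2 : ℝ) : ℂ) by push_cast; rfl,
      show ((2 : ℕ) : ℂ) ^ 2 = (((2 : ℝ) ^ 2 : ℝ) : ℂ) by push_cast; rfl,
      hmul _ _ (by positivity), hmul _ _ (by positivity), hmul _ _ hε, hsq _ hpR,
      hsq _ two_pos] at h
    have h' := congrArg (fun z => (ε : ℂ) ^ (1 / 2 : ℂ) * z) h
    rw [mul_left_comm, Finset.mul_sum, Finset.mul_sum] at h'
    convert h' using 2
    · rw [ofReal_natCast]
      field_simp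
    · refine Finset.sum_congr rfl fun r _ => ?_
      field_simp
      push_cast
      ring
  have ha_lim : Tendsto a (nhdsWithin 0 (Set.Ioi 0)) (nhds (-2 * I / p)) := by
    have : ContinuousAt a 0 := by simp only [ha]; fun_prop
    have := this.tendsto.mono_left (nhdsWithin_le_nhds (s := Set.Ioi 0))
    convert this using 2
    simp [ha]; ring
  have hv_lim : Tendsto v (nhdsWithin 0 (Set.Ioi 0)) (nhds ((((p : ℝ) / 2) ^ 2 : ℝ) : ℂ)) := by
    have := (tendsto_const_nhds (x := -I * (p : ℂ))).div (ha_lim.const_mul 2) (by simp [hpC])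
    have e : ((((p : ℝ) / 2) ^ 2 : ℝ) : ℂ) = -I * (p : ℂ) / (2 * (-2 * I / p)) := by
      push_cast
      field_simp
    rw [e]
    exact this
  -- the principal branch of this square root is what fixes the sign of the sum
  have ha_half : (-2 * I / p : ℂ) ^ (1 / 2 : ℂ) = (1 - I) / Real.sqrt p := by
    have hs : ((Real.sqrt p : ℝ) : ℂ) ^ 2 = p := by
      rw [← ofReal_pow, Real.sq_sqrt hpR.le]; simp
    have : (-2 * I / p : ℂ) = ((1 - I) / Real.sqrt p) ^ 2 := by
      rw [div_pow, hs]
      congr 1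
      linear_combination -I_sq
    rw [this, one_div]
    refine Complex.sq_cpow_two_inv ?_
    rw [div_ofReal_re]
    simpa using hp
  have hslit : (-2 * I / p : ℂ) ∈ slitPlane := by
    rw [mem_slitPlane_iff]
    right
    rw [show (-2 * I / p : ℂ) = ((-2 / p : ℝ) : ℂ) * I by push_cast; ring]
    simp [hp.ne']
  have hslit' : ((((p : ℝ) / 2) ^ 2 : ℝ) : ℂ) ∈ slitPlane := by
    rw [mem_slitPlane_iff]
    left
    rw [ofReal_re]
    positivity
  have L1 : Tendsto (fun ε => ∑ r : Fin p, cexp (2 * Real.pi * I * (r : ℕ) ^ 2 / p) *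
      (1 / p * A r ε)) (nhdsWithin 0 (Set.Ioi 0))
      (nhds (∑ r : Fin p, cexp (2 * Real.pi * I * (r : ℕ) ^ 2 / p) * (1 / p * 1))) :=
    tendsto_finsetSum _ fun r _ => ((hA_lim r).const_mul _).const_mul _
  have L2 := ((tendsto_const_nhds (x := (1 : ℂ))).div
    (ha_lim.cpow (tendsto_const_nhds (x := (1 / 2 : ℂ))) hslit)
      (by rw [ha_half]; simp [hpR.le, hp.ne', sub_eq_zero, Complex.ext_iff])).mul
    (tendsto_finsetSum (Finset.univ : Finset (Fin 2)) fun r _ =>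
      (((tendsto_const_nhds (x := (1 : ℂ))).div
        ((hv_lim.cpow (tendsto_const_nhds (x := (1 / 2 : ℂ))) hslit').const_mul 2)
        (by rw [hsq _ (by positivity)]; simp [hpC])).mul (hB_lim r)).const_mul
          (cexp (-Real.pi * I * p / 2 * (r : ℕ) ^ 2)))
  have L3 := tendsto_nhds_unique (L1.congr' (by
    filter_upwards [self_mem_nhdsWithin] with ε hε using hfe2 ε hε)) L2
  rw [ha_half, hsq _ (by positivity), ← Finset.sum_mul, Fin.sum_univ_two] at L3
  have hI : cexp (-Real.pi * I * p / 2) = -I := by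
    have : cexp (-Real.pi / 2 * I) = -I := by
      rw [Complex.exp_mul_I, neg_div, Complex.cos_neg, Complex.sin_neg]
      simp
    rw [← this, Complex.exp_eq_exp_iff_exists_int]
    obtain ⟨k, rfl⟩ : ∃ k, p = 4 * k + 1 := ⟨p / 4, by omega⟩
    refine ⟨-k, ?_⟩
    push_cast
    ring
  have h1I : (1 - I : ℂ) ≠ 0 := by simp [sub_eq_zero, Complex.ext_iff]
  simp only [Fin.val_zero, Fin.val_one, Nat.cast_zero, Nat.cast_one, ne_eq, OfNat.ofNat_ne_zero,
    not_false_eq_true, zero_pow, mul_zero, Complex.exp_zero, one_pow, mul_one, hI] at L3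
  push_cast at L3
  field_simp at L3
  refine mul_right_cancel₀ h1I ?_
  linear_combination L3

/-! ### Residue symbols and residue fields in `ℤ[i]` -/

/-- Being primary means that `im π` is even and `re π + im π ≡ 1 (mod 4)`; only this direction
is used. -/
theorem primary_arith {π : GaussianInt} (h : IsPrimary π) :
    2 ∣ π.im ∧ (π.re + π.im) % 4 = 1 := by
  obtain ⟨c, hc⟩ := h
  have e : (1 + gi) ^ 3 = (⟨-2, 2⟩ : GaussianInt) := by decide
  rw [e, Zsqrtd.ext_iff] at hc
  simp only [Zsqrtd.re_sub, Zsqrtd.im_sub, Zsqrtd.re_mul, Zsqrtd.im_mul, Zsqrtd.re_one,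
    Zsqrtd.im_one] at hc
  omega

theorem gnorm_eq (π : GaussianInt) : (gnorm π : ℤ) = π.re ^ 2 + π.im ^ 2 := by
  rw [gnorm, abs_natCast_norm, Zsqrtd.norm_def]
  ring

theorem gnorm_mod_four {π : GaussianInt} (h : IsPrimary π) : gnorm π % 4 = 1 := by
  obtain ⟨⟨k, hk⟩, h4⟩ := primary_arith h
  have h1 := gnorm_eq π
  obtain ⟨l, hl⟩ : ∃ l, π.re = 2 * l + 1 := ⟨π.re / 2, by omega⟩
  rw [hk, hl] at h1
  have : (gnorm π : ℤ) = 4 * (k ^ 2 + l ^ 2 + l) + 1 := by rw [h1]; ring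
  omega

theorem gnorm_dvd {a b : GaussianInt} (h : a ∣ b) : gnorm a ∣ gnorm b := by
  obtain ⟨c, rfl⟩ := h
  rw [gnorm, gnorm, Zsqrtd.norm_mul, Int.natAbs_mul]
  exact dvd_mul_right _ _

theorem one_lt_gnorm {π : GaussianInt} (hp : Prime π) : 1 < gnorm π := by
  have h0 : gnorm π ≠ 0 := by
    rw [gnorm, Ne, Int.natAbs_eq_zero, GaussianInt.norm_eq_zero]
    exact hp.ne_zero
  have h1 : gnorm π ≠ 1 := fun h => hp.not_isUnit (Zsqrtd.norm_eq_one_iff.1 h)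
  omega

theorem unit_cases {u : GaussianInt} (hu : IsUnit u) :
    u = 1 ∨ u = -1 ∨ u = gi ∨ u = -gi := by
  have h := Zsqrtd.norm_eq_one_iff.2 hu
  have h1 := gnorm_eq u
  rw [gnorm, h] at h1
  have hr : u.re ^ 2 ≤ 1 := by have := sq_nonneg u.im; push_cast at h1; omega
  have hi : u.im ^ 2 ≤ 1 := by have := sq_nonneg u.re; push_cast at h1; omega
  obtain ⟨r, i⟩ := u
  simp only at *
  have : -1 ≤ r ∧ r ≤ 1 := abs_le.1 ((sq_le_one_iff_abs_le_one _).1 hr)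
  have : -1 ≤ i ∧ i ≤ 1 := abs_le.1 ((sq_le_one_iff_abs_le_one _).1 hi)
  obtain ⟨_, _⟩ := this
  obtain ⟨_, _⟩ := ‹-1 ≤ r ∧ r ≤ 1›
  interval_cases r <;> interval_cases i <;> first | (exfalso; norm_num at h1; done) | decide

/-- Distinct units are incongruent modulo an element whose norm is `1` mod `4` and exceeds `1`. -/
theorem unit_unique {π u v : GaussianInt} (hN : gnorm π % 4 = 1) (hN1 : 1 < gnorm π)
    (hu : IsUnit u) (hv : IsUnit v) (h : π ∣ u - v) : u = v := by
  have hd := gnorm_dvd h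
  by_contra hne
  have h24 : gnorm (u - v) = 2 ∨ gnorm (u - v) = 4 := by
    rcases unit_cases hu with rfl | rfl | rfl | rfl <;>
      rcases unit_cases hv with rfl | rfl | rfl | rfl <;>
      first | exact absurd rfl hne | decide
  have h4 : gnorm π ∣ 4 := by
    rcases h24 with h | h <;> rw [h] at hd
    · exact hd.trans (by norm_num)
    · exact hd
  have := Nat.le_of_dvd (by norm_num) h4
  interval_cases hg : gnorm π <;> omega

/-- The chosen factorization of a prime consists of a single associate, possibly not `π` itself. -/
theorem factors_prime {π : GaussianInt} (hp : Prime π) :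
    ∃ ρ, Associated ρ π ∧ UniqueFactorizationMonoid.factors π = {ρ} := by
  obtain ⟨ρ, h1, h2⟩ := prime_factors_irreducible hp.irreducible
    ⟨UniqueFactorizationMonoid.prime_of_factor,
      UniqueFactorizationMonoid.factors_prod hp.ne_zero⟩
  exact ⟨ρ, h1.symm, h2⟩

theorem quarticSymbol_eq {π a u : GaussianInt} (hp : Prime π) (hN : gnorm π % 4 = 1)
    (hu : IsUnit u) (h : π ∣ a ^ ((gnorm π - 1) / 4) - u) : quarticSymbol a π = u := by
  obtain ⟨ρ, hρ, hf⟩ := factors_prime hp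
  have hg : gnorm ρ = gnorm π := Nat.dvd_antisymm (gnorm_dvd hρ.dvd) (gnorm_dvd hρ.symm.dvd)
  rw [quarticSymbol, hf, Multiset.map_singleton, Multiset.prod_singleton, quarticSymbolPrime]
  have hex : ∃ u : GaussianInt, IsUnit u ∧ ρ ∣ a ^ ((gnorm ρ - 1) / 4) - u :=
    ⟨u, hu, hρ.dvd.trans (hg ▸ h)⟩
  rw [dif_pos hex]
  obtain ⟨hs1, hs2⟩ := hex.choose_spec
  refine (unit_unique hN (one_lt_gnorm hp) hu hs1 ?_).symm
  have := dvd_sub (hρ.symm.dvd.trans hs2) (hg ▸ h)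
  convert this using 1
  ring

theorem quarticSymbol_eq_zero {π a : GaussianInt} (hp : Prime π) (hN : gnorm π % 4 = 1)
    (h : π ∣ a) : quarticSymbol a π = 0 := by
  obtain ⟨ρ, hρ, hf⟩ := factors_prime hp
  have hg : gnorm ρ = gnorm π := Nat.dvd_antisymm (gnorm_dvd hρ.dvd) (gnorm_dvd hρ.symm.dvd)
  rw [quarticSymbol, hf, Multiset.map_singleton, Multiset.prod_singleton, quarticSymbolPrime]
  rw [dif_neg]
  rintro ⟨u, hu, hd⟩
  have h1 := one_lt_gnorm hp
  have h2 : ρ ∣ a ^ ((gnorm ρ - 1) / 4) :=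
    (hρ.dvd.trans h).trans (dvd_pow_self _ (by rw [hg]; omega))
  have h3 := (dvd_sub_right h2).1 hd
  exact hp.not_isUnit (isUnit_of_dvd_unit (hρ.symm.dvd.trans h3) hu)

theorem quarticSymbol_neg_one {π : GaussianInt} (hp : Prime π) (hN : gnorm π % 4 = 1) :
    quarticSymbol (-1) π = (-1) ^ ((gnorm π - 1) / 4) :=
  quarticSymbol_eq hp hN (isUnit_one.neg.pow _) (by simp)

/-- The quadratic residue symbol modulo a prime is the quadratic character of the residue field,
here given as any field receiving a surjection with the right kernel. -/
theorem quadSymbol_eq {π : GaussianInt} (hp : Prime π) (hN : gnorm π % 4 = 1)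
    {F : Type*} [Field F] [Fintype F] [DecidableEq F] (f : GaussianInt →+* F)
    (hker : ∀ z, f z = 0 ↔ π ∣ z) (hcard : Fintype.card F = gnorm π) (a : GaussianInt) :
    quadSymbol a π = ((quadraticChar F (f a) : ℤ) : GaussianInt) := by
  have hN1 := one_lt_gnorm hp
  have hF : ringChar F ≠ 2 := by
    intro h
    have h2 : ((2 : ℕ) : F) = 0 := by rw [← h]; exact ringChar.Nat.cast_ringChar
    have : π ∣ 2 := (hker 2).1 (by rw [map_ofNat]; exact_mod_cast h2)
    have := gnorm_dvd this
    rw [show gnorm 2 = 4 by decide] at this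
    have := Nat.le_of_dvd (by norm_num) this
    interval_cases hg : gnorm π <;> omega
  by_cases ha : π ∣ a
  · rw [quadSymbol, quarticSymbol_eq_zero hp hN ha, (hker a).2 ha]
    simp
  have hfa : f a ≠ 0 := fun h => ha ((hker a).1 h)
  have h1 := FiniteField.pow_card_sub_one_eq_one (f a) hfa
  rw [hcard] at h1
  set e := (gnorm π - 1) / 4 with he
  have he4 : gnorm π - 1 = e * 4 := by omega
  have hgi : f gi ^ 2 = -1 := by
    rw [← map_pow, show gi ^ 2 = -1 by decide]; simp
  obtain ⟨u, hu, hd⟩ : ∃ u, IsUnit u ∧ π ∣ a ^ e - u := by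
    simp only [← hker, map_sub, map_pow, sub_eq_zero]
    rw [he4, pow_mul] at h1
    -- `X ^ 4 - 1` splits over the residue field because it contains the image of `i`
    have h2 : (f a ^ e - 1) * ((f a ^ e + 1) * ((f a ^ e - f gi) * (f a ^ e + f gi))) = 0 := by
      linear_combination h1 - ((f a ^ e) ^ 2 - 1) * hgi
    have hgu : IsUnit gi := IsUnit.of_mul_eq_one (-gi) (by decide)
    rcases mul_eq_zero.1 h2 with h | h
    · exact ⟨1, isUnit_one, by rw [map_one]; linear_combination h⟩
    rcases mul_eq_zero.1 h with h | h
    · exact ⟨-1, isUnit_one.neg, by rw [map_neg, map_one]; linear_combination h⟩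
    rcases mul_eq_zero.1 h with h | h
    · exact ⟨gi, hgu, by linear_combination h⟩
    · exact ⟨-gi, hgu.neg, by rw [map_neg]; linear_combination h⟩
  rw [quadSymbol, quarticSymbol_eq hp hN hu hd]
  refine unit_unique hN hN1 (hu.pow 2) ?_ ?_
  · rcases quadraticChar_dichotomy hfa with h | h <;> rw [h] <;> simp
  · rw [← hker] at hd ⊢
    rw [map_sub, map_pow, sub_eq_zero] at hd
    rw [map_sub, map_pow, map_intCast, quadraticChar_eq_pow_of_char_ne_two' hF, ← hd, hcard,
      ← pow_mul, show gnorm π / 2 = e * 2 by omega, sub_self]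

/-- The additive character `ẽ` only sees the imaginary part. -/
theorem eTilde_eq (z : ℂ) : eTilde z = cexp (2 * Real.pi * I * z.im) := by
  rw [eTilde]
  congr 1
  have := Complex.sub_conj z
  rw [← sub_div, this]
  field_simp
  push_cast
  ring

theorem eTilde_div {π z : GaussianInt} (hp : π ≠ 0) :
    eTilde (toComplex z / toComplex π) =
      cexp (2 * Real.pi * I * ((z.im * π.re - z.re * π.im : ℤ) : ℂ) / gnorm π) := by
  have h0 : (gnorm π : ℂ) ≠ 0 := by
    rw [gnorm]
    exact_mod_cast Int.natAbs_ne_zero.2 (fun h => hp (GaussianInt.norm_eq_zero.1 h))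
  rw [eTilde_eq, mul_div_assoc]
  congr 2
  rw [Complex.div_im, ← intCast_real_norm, ← GaussianInt.intCast_re,
    ← GaussianInt.intCast_re, ← GaussianInt.intCast_im, ← GaussianInt.intCast_im]
  have : (π.norm : ℝ) = gnorm π := by
    rw [gnorm]; exact (natCast_natAbs_norm π).symm
  rw [this]
  push_cast
  field_simp

/-- The summand `(z/π) ẽ(z/π)` of the Gauss sum, as a function of a representative `z` in `ℤ[i]`. -/
def gaussTerm (π z : GaussianInt) : ℂ :=
  toComplex (quadSymbol z π) * eTilde (toComplex z / toComplex π)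

/-- The summand depends only on the class modulo `π`. -/
theorem gaussTerm_congr {π : GaussianInt} (hp : Prime π) (hN : gnorm π % 4 = 1)
    {F : Type*} [Field F] [Fintype F] [DecidableEq F] (f : GaussianInt →+* F)
    (hker : ∀ z, f z = 0 ↔ π ∣ z) (hcard : Fintype.card F = gnorm π) {z z' : GaussianInt}
    (h : f z = f z') : gaussTerm π z = gaussTerm π z' := by
  rw [gaussTerm, gaussTerm, quadSymbol_eq hp hN f hker hcard, quadSymbol_eq hp hN f hker hcard, h]
  congr 1
  obtain ⟨w, hw⟩ := (hker (z - z')).1 (by rw [map_sub, h, sub_self])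
  obtain rfl : z = z' + π * w := by rw [← hw]; ring
  have h0 : toComplex π ≠ 0 := fun h => hp.ne_zero (GaussianInt.toComplex_eq_zero.1 h)
  rw [toComplex_add, toComplex_mul, add_div, mul_div_cancel_left₀ _ h0, eTilde_eq, eTilde_eq,
    add_im, ← GaussianInt.intCast_im w, Complex.exp_eq_exp_iff_exists_int]
  exact ⟨w.im, by push_cast; ring⟩

/-- The Gauss sum may be computed with any residue field and any system of representatives. -/
theorem quadGaussSum_eq {π : GaussianInt} (hp : Prime π) (hN : gnorm π % 4 = 1)
    {F : Type*} [Field F] [Fintype F] [DecidableEq F] (f : GaussianInt →+* F)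
    (hker : ∀ z, f z = 0 ↔ π ∣ z) (hcard : Fintype.card F = gnorm π)
    (s : F → GaussianInt) (hs : ∀ x, f (s x) = x) :
    quadGaussSum π = ∑ x : F, gaussTerm π (s x) := by
  have hI : ∀ z ∈ Ideal.span {π}, f z = 0 := fun z hz =>
    (hker z).2 (Ideal.mem_span_singleton.1 hz)
  let g := Ideal.Quotient.lift (Ideal.span {π}) f hI
  have hg : Function.Bijective g := by
    constructor
    · rw [injective_iff_map_eq_zero]
      intro x hx
      obtain ⟨z, rfl⟩ := Ideal.Quotient.mk_surjective x
      rw [Ideal.Quotient.lift_mk, hker] at hx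
      rwa [Ideal.Quotient.eq_zero_iff_mem, Ideal.mem_span_singleton]
    · intro x
      exact ⟨Ideal.Quotient.mk _ (s x), by rw [Ideal.Quotient.lift_mk, hs]⟩
  rw [quadGaussSum, ← tsum_fintype (L := .unconditional _),
    ← (Equiv.ofBijective g hg).tsum_eq]
  refine tsum_congr fun x => ?_
  refine gaussTerm_congr hp hN f hker hcard ?_
  rw [hs]
  have : Ideal.Quotient.mk (Ideal.span {π}) (Quotient.out x) = x := Quotient.out_eq x
  change _ = g x
  conv_rhs => rw [← this]
  exact (Ideal.Quotient.lift_mk _ f hI).symm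

/-! ### Primes of degree one -/

open scoped Classical in
/-- The quadratic Gauss sum over `ℤ/p` is `∑ ψ(n²)`, since `1 + (a/p)` counts the square roots
of `a`. -/
theorem sum_sq {p : ℕ} [Fact p.Prime] (hp2 : p ≠ 2) (ψ : AddChar (ZMod p) ℂ) (hψ : ψ ≠ 1) :
    gaussSum ((quadraticChar (ZMod p)).ringHomComp (Int.castRingHom ℂ)) ψ =
      ∑ n : ZMod p, ψ (n ^ 2) := by
  have hF : ringChar (ZMod p) ≠ 2 := by rwa [ZMod.ringChar_zmod_n]
  have h1 : ∑ n : ZMod p, ψ (n ^ 2) = ∑ a : ZMod p, ((quadraticChar (ZMod p) a : ℤ) + 1) * ψ a := by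
    rw [← Finset.sum_fiberwise (s := Finset.univ) (g := fun n : ZMod p => n ^ 2)]
    refine Finset.sum_congr rfl fun a _ => ?_
    rw [Finset.sum_congr rfl (g := fun _ => ψ a) (by
      intro n hn; rw [(Finset.mem_filter.1 hn).2]), Finset.sum_const, nsmul_eq_mul]
    congr 1
    have := quadraticChar_card_sqrts hF a
    rw [← Int.cast_one (R := ℂ), ← Int.cast_add, ← this]
    push_cast
    congr 2
    ext n
    simp
  rw [h1]
  simp only [add_mul, one_mul, Finset.sum_add_distrib, AddChar.sum_eq_zero_of_ne_one hψ, add_zero]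
  rfl

/-- The classical quadratic Gauss sum is `√p` for `p ≡ 1 (mod 4)`. -/
theorem gauss_std {p : ℕ} [hp : Fact p.Prime] (hp4 : p % 4 = 1) :
    gaussSum ((quadraticChar (ZMod p)).ringHomComp (Int.castRingHom ℂ)) ZMod.stdAddChar =
      Real.sqrt p := by
  have h2 : p ≠ 2 := by omega
  have hψ : (ZMod.stdAddChar : AddChar (ZMod p) ℂ) ≠ 1 := by
    have := ZMod.isPrimitive_stdAddChar p (one_ne_zero)
    simpa using this
  rw [sum_sq h2 _ hψ, ← gauss_limit p hp.out.pos hp4]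
  obtain ⟨m, rfl⟩ : ∃ m, p = m + 1 := ⟨p - 1, by have := hp.out.pos; omega⟩
  change ∑ n : Fin (m + 1), _ = _
  refine Finset.sum_congr rfl fun r _ => ?_
  have : ((r : ZMod (m + 1)) ^ 2) = (((r : ℕ) ^ 2 : ℤ) : ZMod (m + 1)) := by
    push_cast
    congr 1
    exact (ZMod.natCast_zmod_val (n := m + 1) r).symm
  erw [this]
  rw [ZMod.stdAddChar_coe]
  push_cast
  rfl

/-- The rational quadratic character of `-im π`, where `p = m² + c²` and `c = im π` is even. -/
theorem legendre_im {p : ℕ} [hp : Fact p.Prime] {m c : ℤ} (h : (p : ℤ) = m ^ 2 + c ^ 2)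
    (hc : 2 ∣ c) (hp4 : p % 4 = 1) : legendreSym p (-c) = (-1) ^ ((p - 1) / 4) := by
  have hneg : legendreSym p (-1) = 1 := by
    rw [legendreSym.at_neg_one (by omega), ZMod.χ₄_nat_one_mod_four hp4]
  have habs : legendreSym p (-c) = legendreSym p c.natAbs := by
    rcases Int.natAbs_eq c with h | h
    · conv_lhs => rw [h, neg_eq_neg_one_mul, legendreSym.mul, hneg, one_mul]
    · conv_lhs => rw [h, neg_neg]
  have hc0 : c.natAbs ≠ 0 := by
    intro h0
    rw [Int.natAbs_eq_zero] at h0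
    subst h0
    have h' : p = m.natAbs ^ 2 := by zify; rw [sq_abs]; linarith
    exact (Nat.Prime.not_prime_pow (le_refl 2)) (h' ▸ hp.out)
  have hm : m % 2 = 1 := by
    obtain ⟨k, rfl⟩ := hc
    by_contra hm
    obtain ⟨l, rfl⟩ : ∃ l, m = 2 * l := ⟨m / 2, by omega⟩
    have : (p : ℤ) = 4 * (l ^ 2 + k ^ 2) := by rw [h]; ring
    omega
  obtain ⟨k, d, hd, hkd⟩ := Nat.exists_eq_two_pow_mul_odd hc0
  have hpodd : Odd p := by rw [Nat.odd_iff]; omega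
  have hcd : c ^ 2 = (2 ^ k * d : ℤ) ^ 2 := by
    rw [← sq_abs, Int.abs_eq_natAbs, hkd]; push_cast; rfl
  -- by reciprocity `(d/p) = (p/d)`, and `p ≡ m²` modulo the odd part `d` of `c`
  have hdp : jacobiSym d p = 1 := by
    rw [← jacobiSym.quadratic_reciprocity_one_mod_four hp4 hd]
    have e : (p : ℤ) % d = (m ^ 2) % d := by
      rw [h, hcd]
      exact Int.emod_emod_of_dvd _ (dvd_refl _) ▸ by
        rw [Int.emod_emod_of_dvd _ (dvd_refl _)]
        have : (2 ^ k * d : ℤ) ^ 2 = d * (2 ^ (2 * k) * d) := by ring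
        rw [this, Int.add_mul_emod_self_left]
    rw [jacobiSym.mod_left' e, jacobiSym.pow_left]
    refine jacobiSym.sq_one ?_
    by_contra hg
    obtain ⟨q, hq, hqd⟩ := Nat.exists_prime_and_dvd hg
    have hq' : (q : ℤ) ∣ (Int.gcd m d : ℕ) := by exact_mod_cast hqd
    have h1 : (q : ℤ) ∣ m := hq'.trans (Int.gcd_dvd_left ..)
    have h2 : (q : ℤ) ∣ d := hq'.trans (Int.gcd_dvd_right ..)
    obtain ⟨m', rfl⟩ := h1
    obtain ⟨d', hd'⟩ := h2
    have h3 : (p : ℤ) = (q * q : ℕ) * (m' ^ 2 + (2 ^ k * d') ^ 2) := by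
      rw [h, hcd, hd']; push_cast; ring
    have h4 : q * q ∣ p := by exact_mod_cast Dvd.intro _ h3.symm
    have h5 := (Nat.prime_dvd_prime_iff_eq hq hp.out).1 ((dvd_mul_right q q).trans h4)
    subst h5
    have := Nat.le_of_dvd hp.out.pos h4
    nlinarith [hp.out.two_le]
  have hkp : k ≠ 0 := by
    rintro rfl
    rw [Nat.odd_iff] at hd
    omega
  rw [habs, jacobiSym.legendreSym.to_jacobiSym, hkd]
  push_cast
  rw [jacobiSym.mul_left, jacobiSym.pow_left, hdp, mul_one, jacobiSym.at_two hpodd]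
  obtain ⟨l, rfl⟩ : ∃ l, m = 2 * l + 1 := ⟨m / 2, by omega⟩
  obtain ⟨s, hs⟩ : ∃ s, l ^ 2 + l = 2 * s := by
    obtain ⟨s, hs⟩ := (Int.even_mul_succ_self l).two_dvd
    exact ⟨s, by linarith⟩
  -- `p ≡ 5 (mod 8)` when `c ≡ 2 (mod 4)`, and `p ≡ 1 (mod 8)` when `4 ∣ c`
  rcases Nat.lt_or_ge k 2 with hk | hk
  · obtain rfl : k = 1 := by omega
    obtain ⟨t, ht⟩ := hd
    have h8 : (p : ℤ) = 8 * (s + 2 * (t ^ 2 + t)) + 5 := by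
      rw [h, hcd, ht]; push_cast; linear_combination 4 * hs
    have hp8 : p % 8 = 5 := by omega
    have : (ZMod.χ₈ (p : ZMod 8)) = -1 := by
      rw [ZMod.χ₈_nat_eq_if_mod_eight]; simp [hp8]; omega
    rw [this, pow_one, Odd.neg_one_pow]
    rw [Nat.odd_iff]; omega
  · obtain ⟨j, rfl⟩ := Nat.exists_eq_add_of_le hk
    have h8 : (p : ℤ) = 8 * (s + 2 * (2 ^ j * d) ^ 2) + 1 := by
      rw [h, hcd, pow_add]; linear_combination 4 * hs
    have hp8 : p % 8 = 1 := by omega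
    have : (ZMod.χ₈ (p : ZMod 8)) = 1 := by
      rw [ZMod.χ₈_nat_eq_if_mod_eight]; simp [hp8]; omega
    rw [this, one_pow, Even.neg_one_pow]
    rw [Nat.even_iff]; omega

/-- The theorem for `π` of degree one: identifying `ℤ[i]/(π)` with `ℤ/p`, the additive character
becomes `k ↦ exp(-2πi k b/p)` with `b = im π`, whence the factor `(-b/p)`. -/
theorem gauss_split {π : GaussianInt} (hp : Prime π) (hprim : IsPrimary π)
    (hP : (gnorm π).Prime) :
    quadGaussSum π = toComplex (quarticSymbol (-1) π) * Real.sqrt (gnorm π) := by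
  have hN := gnorm_mod_four hprim
  have him := (primary_arith hprim).1
  have hn := gnorm_eq π
  obtain ⟨p, hpp⟩ : ∃ p, gnorm π = p := ⟨_, rfl⟩
  rw [hpp] at hP hn
  have hp4 : p % 4 = 1 := hpp ▸ hN
  have : Fact p.Prime := ⟨hP⟩
  set a := π.re with ha
  set b := π.im with hb
  have hsum : (a : ZMod p) ^ 2 + (b : ZMod p) ^ 2 = 0 := by
    have := congrArg (Int.cast : ℤ → ZMod p) hn
    push_cast at this
    rw [← this, CharP.cast_eq_zero]
  have hleg := legendre_im hn him hp4
  have hb0 : (b : ZMod p) ≠ 0 := by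
    intro h
    have h' : legendreSym p (-b) = 0 := by
      rw [legendreSym.eq_zero_iff]; push_cast; rw [h, neg_zero]
    rw [h'] at hleg
    exact pow_ne_zero _ (by norm_num) hleg.symm
  -- the reduction map sends `i` to `-a / b`
  let f : GaussianInt →+* ZMod p := Zsqrtd.lift ⟨-a / b, by
    field_simp
    push_cast
    linear_combination hsum⟩
  have hf : ∀ z, f z = (z.re : ZMod p) + z.im * (-a / b) := fun z => rfl
  have hker : ∀ z, f z = 0 ↔ π ∣ z := by
    intro z
    constructor
    · intro h
      rw [hf] at h
      have h1 : (z.im * a - z.re * b : ZMod p) = 0 := by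
        field_simp at h
        linear_combination -h
      have h2 : (z.re * a + z.im * b : ZMod p) = 0 := by
        refine (mul_eq_zero.1 (?_ : (b : ZMod p) * _ = 0)).resolve_left hb0
        linear_combination -(a : ZMod p) * h1 + (z.im : ZMod p) * hsum
      have h1' : (p : ℤ) ∣ z.im * a - z.re * b := by
        rw [← ZMod.intCast_zmod_eq_zero_iff_dvd]; push_cast; exact h1
      have h2' : (p : ℤ) ∣ z.re * a + z.im * b := by
        rw [← ZMod.intCast_zmod_eq_zero_iff_dvd]; push_cast; exact h2
      obtain ⟨s, hs⟩ := h1'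
      obtain ⟨t, ht⟩ := h2'
      refine ⟨⟨t, s⟩, ?_⟩
      have hpz : (p : ℤ) ≠ 0 := by exact_mod_cast hP.ne_zero
      rw [Zsqrtd.ext_iff]
      simp only [Zsqrtd.re_mul, Zsqrtd.im_mul, ← ha, ← hb]
      constructor <;> refine mul_left_cancel₀ hpz ?_
      · linear_combination z.re * hn + a * ht - b * hs
      · linear_combination z.im * hn + a * hs + b * ht
    · rintro ⟨w, rfl⟩
      rw [map_mul, hf π, ← ha, ← hb]
      field_simp
      ring
  rw [quadGaussSum_eq hp hN f hker (by rw [ZMod.card, hpp]) (fun k => ((k.val : ℤ) : GaussianInt))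
    (fun k => by rw [map_intCast]; simp)]
  have hterm : ∀ k : ZMod p, gaussTerm π ((k.val : ℤ) : GaussianInt) =
      ((quadraticChar (ZMod p)).ringHomComp (Int.castRingHom ℂ)) k *
        (ZMod.stdAddChar.mulShift ((-b : ℤ) : ZMod p)) k := by
    intro k
    rw [gaussTerm, quadSymbol_eq hp hN f hker (by rw [ZMod.card, hpp]), eTilde_div hp.ne_zero]
    have hk : ((k.val : ℤ) : ZMod p) = k := by simp
    congr 1
    · rw [map_intCast, map_intCast, hk]
      rfl
    · rw [AddChar.mulShift_apply]
      conv_rhs => rw [← hk]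
      rw [← Int.cast_mul, ZMod.stdAddChar_coe, hpp]
      congr 2
      rw [Zsqrtd.re_intCast, Zsqrtd.im_intCast, ← ha, ← hb]
      push_cast
      ring
  rw [Finset.sum_congr rfl fun k _ => hterm k]
  change gaussSum _ _ = _
  have hunit : IsUnit ((-b : ℤ) : ZMod p) := by
    rw [isUnit_iff_ne_zero]; push_cast; exact neg_ne_zero.2 hb0
  obtain ⟨u, hu⟩ := hunit
  have key := gaussSum_mulShift ((quadraticChar (ZMod p)).ringHomComp (Int.castRingHom ℂ))
    ZMod.stdAddChar u
  rw [gauss_std hp4, hu] at key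
  have hχ : ((quadraticChar (ZMod p)).ringHomComp (Int.castRingHom ℂ)) ((-b : ℤ) : ZMod p) =
      (-1) ^ ((p - 1) / 4) := by
    have := congrArg (Int.cast : ℤ → ℂ) hleg
    push_cast at this
    rw [← this]
    rfl
  rw [hχ] at key
  rw [quarticSymbol_neg_one hp hN, map_pow, map_neg, map_one, hpp, ← key, ← mul_assoc, ← mul_pow]
  simp

/-! ### Inert primes -/

/-- In a field with `p²` elements, the nonzero elements of the prime field are squares. -/
theorem quadraticChar_of_pow {F : Type*} [Field F] [Fintype F] [DecidableEq F] {p : ℕ}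
    (hp : p % 2 = 1) (hF : ringChar F ≠ 2) (hcard : Fintype.card F = p ^ 2) {t : F} (h0 : t ≠ 0)
    (ht : t ^ (p - 1) = 1) : quadraticChar F t = 1 := by
  rw [quadraticChar_eq_pow_of_char_ne_two hF h0, if_pos]
  obtain ⟨k, rfl⟩ : ∃ k, p = 2 * k + 1 := ⟨p / 2, by omega⟩
  have : (2 * k + 1) ^ 2 / 2 = (2 * k + 1 - 1) * (k + 1) := by
    have : (2 * k + 1) ^ 2 = 2 * ((2 * k) * (k + 1)) + 1 := by ring
    rw [Nat.add_sub_cancel]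
    omega
  rw [hcard, this, pow_mul, ht, one_pow]

/-- Orthogonality of additive characters modulo `p`. -/
theorem sum_exp_pow {p : ℕ} (hp : 0 < p) (c : ℤ) :
    ∑ t ∈ Finset.range p, cexp (2 * Real.pi * I * c / p) ^ t = if (p : ℤ) ∣ c then (p : ℂ) else 0 := by
  have hpC : (p : ℂ) ≠ 0 := by exact_mod_cast hp.ne'
  have hpi : (Real.pi : ℂ) ≠ 0 := by exact_mod_cast Real.pi_ne_zero
  have hone : cexp (2 * Real.pi * I * c / p) = 1 ↔ (p : ℤ) ∣ c := by
    rw [Complex.exp_eq_one_iff]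
    refine exists_congr fun n => ?_
    rw [← Int.cast_inj (α := ℂ)]
    push_cast
    constructor
    · intro h
      have h2 : (2 * Real.pi * I : ℂ) ≠ 0 := two_pi_I_ne_zero
      refine mul_left_cancel₀ h2 ?_
      field_simp at h
      linear_combination (2 * Real.pi * I) * h
    · intro h
      rw [h]
      field_simp
  split_ifs with h
  · rw [hone.2 h]; simp
  · have h1 : cexp (2 * Real.pi * I * c / p) ≠ 1 := fun h' => h (hone.1 h')
    rw [geom_sum_eq h1, ← Complex.exp_nat_mul]
    have : cexp (p * (2 * Real.pi * I * c / p)) = 1 := by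
      rw [Complex.exp_eq_one_iff]
      exact ⟨c, by field_simp⟩
    rw [this, sub_self, zero_div]

open scoped Classical in
/-- The theorem for an inert prime `π = ±p`. The residue symbol is trivial on nonzero rational
residues `t`, so substituting `t x` for `x` and summing over `t` modulo `p` isolates the `x` whose
imaginary part vanishes modulo `p`; this yields `(p - 1) g(π) = p (p - 1)`. -/
theorem gauss_inert {π : GaussianInt} (hp : Prime π) (hprim : IsPrimary π) {p : ℕ}
    (hP : p.Prime) {σ : ℤ} (hσ : σ = 1 ∨ σ = -1) (hre : π.re = σ * p) (him : π.im = 0) :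
    quadGaussSum π = toComplex (quarticSymbol (-1) π) * Real.sqrt (gnorm π) := by
  have hN := gnorm_mod_four hprim
  have hσ2 : σ * σ = 1 := by rcases hσ with rfl | rfl <;> norm_num
  have hn : gnorm π = p ^ 2 := by
    have := gnorm_eq π
    rw [hre, him] at this
    zify
    linear_combination this + (p : ℤ) ^ 2 * hσ2
  have hodd : p % 2 = 1 := by
    by_contra h
    obtain ⟨k, rfl⟩ : ∃ k, p = 2 * k := ⟨p / 2, by omega⟩
    have : gnorm π = 4 * k ^ 2 := by rw [hn]; ring
    omega
  have : Fact p.Prime := ⟨hP⟩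
  have hpC : (p : ℂ) ≠ 0 := by exact_mod_cast hP.ne_zero
  have hdvd : ∀ z : GaussianInt, π ∣ z ↔ (p : ℤ) ∣ z.re ∧ (p : ℤ) ∣ z.im := by
    have hπ : π = ((σ * p : ℤ) : GaussianInt) := by
      rw [Zsqrtd.ext_iff, Zsqrtd.re_intCast, Zsqrtd.im_intCast]; exact ⟨hre, him⟩
    intro z
    rw [hπ, Zsqrtd.intCast_dvd]
    rcases hσ with rfl | rfl <;> simp
  let F := GaussianInt ⧸ Ideal.span {π}
  have hmax : (Ideal.span {π}).IsMaximal :=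
    PrincipalIdealRing.isMaximal_of_irreducible hp.irreducible
  let _ : Field F := Ideal.Quotient.field _
  let f : GaussianInt →+* F := Ideal.Quotient.mk _
  have hker : ∀ z, f z = 0 ↔ π ∣ z := fun z => by
    rw [Ideal.Quotient.eq_zero_iff_mem, Ideal.mem_span_singleton]
  let e₀ : ZMod p × ZMod p → F := fun v => f ⟨v.1.val, v.2.val⟩
  have he₀ : Function.Bijective e₀ := by
    constructor
    · rintro ⟨x, y⟩ ⟨x', y'⟩ h
      have h1 := (hker _).1 (show f (⟨x.val, y.val⟩ - ⟨x'.val, y'.val⟩) = 0 by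
        rw [map_sub, sub_eq_zero]; exact h)
      rw [hdvd] at h1
      simp only [Zsqrtd.re_sub, Zsqrtd.im_sub, ← ZMod.intCast_zmod_eq_zero_iff_dvd] at h1
      push_cast at h1
      simp only [ZMod.natCast_zmod_val, sub_eq_zero] at h1
      exact Prod.ext h1.1 h1.2
    · intro w
      obtain ⟨z, rfl⟩ := Ideal.Quotient.mk_surjective w
      refine ⟨(z.re, z.im), ?_⟩
      change f _ = f z
      rw [← sub_eq_zero, ← map_sub, hker, hdvd]
      simp [← ZMod.intCast_zmod_eq_zero_iff_dvd]
  let e := Equiv.ofBijective e₀ he₀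
  let _ : Fintype F := Fintype.ofEquiv _ e
  have hcard : Fintype.card F = gnorm π := by
    rw [← Fintype.card_congr e, Fintype.card_prod, ZMod.card, hn, sq]
  have hpF : (p : F) = 0 := by
    have := (hker (p : ℤ)).2 ((hdvd _).2 (by simp))
    rw [map_intCast] at this
    exact_mod_cast this
  have hF : ringChar F ≠ 2 := by
    have : ringChar F ∣ p := ringChar.dvd hpF
    intro h
    rw [h] at this
    omega
  -- nonzero residues of rational integers are squares in the field with `p ^ 2` elements
  have hχ : ∀ t : ℕ, ¬ p ∣ t → quadraticChar F (t : F) = 1 := by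
    intro t ht
    have ht0 : (t : ZMod p) ≠ 0 := by rwa [Ne, ZMod.natCast_eq_zero_iff]
    refine quadraticChar_of_pow hodd hF (hcard.trans hn) ?_ ?_
    · intro h
      have h1 := (hker (t : ℤ)).1 (by rw [map_intCast]; exact_mod_cast h)
      rw [hdvd] at h1
      exact ht (by simpa [Int.natCast_dvd_natCast] using h1.1)
    · have h1 := ZMod.pow_card_sub_one_eq_one ht0
      have h2 := (ZMod.intCast_zmod_eq_zero_iff_dvd ((t : ℤ) ^ (p - 1) - 1) p).1 (by
        push_cast; rw [h1, sub_self])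
      obtain ⟨k, hk⟩ := h2
      have h3 := congrArg (Int.cast : ℤ → F) hk
      push_cast at h3
      rw [hpF, zero_mul, sub_eq_zero] at h3
      exact h3
  let s : F → GaussianInt := fun w => ⟨(e.symm w).1.val, (e.symm w).2.val⟩
  have hs : ∀ w, f (s w) = w := fun w => e.apply_symm_apply w
  have hE : ∀ z : GaussianInt, eTilde (toComplex z / toComplex π) =
      cexp (2 * Real.pi * I * ((z.im * σ : ℤ) : ℂ) / p) := by
    intro z
    rw [eTilde_div hp.ne_zero, hre, him, hn]
    congr 1
    push_cast
    field_simp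
    ring
  have hscale : ∀ t ∈ Finset.range p, t ≠ 0 → quadGaussSum π = ∑ w : F,
      ((quadraticChar F w : ℤ) : ℂ) * cexp (2 * Real.pi * I * (((s w).im * σ : ℤ) : ℂ) / p) ^ t := by
    intro t htp ht0
    have ht : ¬ p ∣ t := fun h => by
      have := Nat.le_of_dvd (by omega) h
      rw [Finset.mem_range] at htp
      omega
    have htF : (t : F) ≠ 0 := fun h => by
      have := hχ t ht
      rw [h] at this
      simp at this
    rw [quadGaussSum_eq hp hN f hker hcard s hs, ← Equiv.sum_comp (Equiv.mulLeft₀ (t : F) htF)]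
    refine Finset.sum_congr rfl fun w _ => ?_
    rw [gaussTerm_congr hp hN f hker hcard (z' := (t : ℤ) * s w) (by
      rw [hs, map_mul, hs, map_intCast, Int.cast_natCast]; rfl), gaussTerm,
      quadSymbol_eq hp hN f hker hcard, map_mul f, hs, map_intCast f, Int.cast_natCast, map_mul,
      hχ t ht, one_mul, map_intCast, hE, ← Complex.exp_nat_mul]
    congr 2
    simp only [Zsqrtd.im_mul, Zsqrtd.re_intCast, Zsqrtd.im_intCast]
    push_cast
    ring
  have hzero : ∑ w : F, ((quadraticChar F w : ℤ) : ℂ) = 0 := by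
    exact_mod_cast quadraticChar_sum_zero hF
  -- average `hscale` over `t`; the missing term `t = 0` vanishes by `hzero`
  have hsum : ((p : ℂ) - 1) * quadGaussSum π = ∑ w : F, ((quadraticChar F w : ℤ) : ℂ) *
      if (p : ℤ) ∣ (s w).im * σ then (p : ℂ) else 0 := by
    simp_rw [← sum_exp_pow hP.pos, Finset.mul_sum]
    rw [Finset.sum_comm]
    obtain ⟨m, hm⟩ : ∃ m, p = m + 1 := ⟨p - 1, by have := hP.pos; omega⟩
    have hr : Finset.range p = insert 0 ((Finset.range p).erase 0) :=
      (Finset.insert_erase (Finset.mem_range.2 hP.pos)).symm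
    rw [hr, Finset.sum_insert (Finset.notMem_erase _ _)]
    simp only [pow_zero, mul_one]
    rw [hzero, zero_add, Finset.sum_congr rfl fun t ht => (hscale t (Finset.mem_of_mem_erase ht)
      (Finset.ne_of_mem_erase ht)).symm, Finset.sum_const,
      Finset.card_erase_of_mem (Finset.mem_range.2 hP.pos), Finset.card_range, nsmul_eq_mul,
      Nat.cast_sub hP.one_le, Nat.cast_one]
  have hval : ∑ w : F, ((quadraticChar F w : ℤ) : ℂ) *
      (if (p : ℤ) ∣ (s w).im * σ then (p : ℂ) else 0) = ((p : ℂ) - 1) * p := by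
    rw [← e.sum_comp, Fintype.sum_prod_type]
    have h1 : ∀ x y : ZMod p, ((quadraticChar F (e (x, y)) : ℤ) : ℂ) *
        (if (p : ℤ) ∣ (s (e (x, y))).im * σ then (p : ℂ) else 0) =
        if y = 0 then (if x = 0 then 0 else (p : ℂ)) else 0 := by
      intro x y
      have h2 : (s (e (x, y))).im = y.val := by simp only [s, Equiv.symm_apply_apply]
      have h3 : (p : ℤ) ∣ (y.val : ℤ) * σ ↔ y = 0 := by
        have : (p : ℤ) ∣ (y.val : ℤ) * σ ↔ (p : ℤ) ∣ (y.val : ℤ) := by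
          rcases hσ with rfl | rfl <;> simp
        rw [this, ← ZMod.intCast_zmod_eq_zero_iff_dvd]
        push_cast
        rw [ZMod.natCast_zmod_val]
      rw [h2]
      simp only [h3]
      split_ifs with hy hx
      · subst hy hx
        have : e (0, 0) = 0 := by
          change f ⟨(0 : ZMod p).val, (0 : ZMod p).val⟩ = 0
          rw [hker, hdvd]
          simp
        rw [this]
        simp
      · subst hy
        have : e (x, 0) = (x.val : F) := by
          change f ⟨x.val, (0 : ZMod p).val⟩ = _
          rw [← map_natCast f]
          congr 1
          rw [Zsqrtd.ext_iff, Zsqrtd.re_natCast, Zsqrtd.im_natCast, ZMod.val_zero]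
          exact ⟨rfl, rfl⟩
        rw [this, hχ _ (by rwa [← ZMod.natCast_eq_zero_iff, ZMod.natCast_zmod_val])]
        simp
      · simp
    simp_rw [h1]
    simp only [Finset.sum_ite_eq', Finset.mem_univ, if_true]
    rw [Finset.sum_ite]
    simp only [Finset.sum_const_zero, zero_add, Finset.sum_const, nsmul_eq_mul]
    congr 1
    have : (Finset.univ.filter fun x : ZMod p => ¬ x = 0) = Finset.univ.erase 0 := by
      ext; simp
    rw [this, Finset.card_erase_of_mem (Finset.mem_univ _), Finset.card_univ, ZMod.card,
      Nat.cast_sub hP.one_le, Nat.cast_one]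
  have hp1 : (p : ℂ) - 1 ≠ 0 := by
    rw [sub_ne_zero]
    exact_mod_cast hP.one_lt.ne'
  have hg : quadGaussSum π = p := mul_left_cancel₀ hp1 (hsum.trans hval)
  have heven : Even ((p ^ 2 - 1) / 4) := by
    obtain ⟨k, hk⟩ : ∃ k, p = 2 * k + 1 := ⟨p / 2, by omega⟩
    obtain ⟨l, hl⟩ := (Nat.even_mul_succ_self k).two_dvd
    have : p ^ 2 = 8 * l + 1 := by rw [hk]; linear_combination 4 * hl
    rw [this, Nat.even_iff]
    omega
  rw [hg, quarticSymbol_neg_one hp hN, hn, heven.neg_one_pow, map_one, one_mul, Nat.cast_pow,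
    Real.sqrt_sq (Nat.cast_nonneg _), ofReal_natCast]

/-! ### The evaluation at an arbitrary primary prime -/

/-- Evaluation of the Gauss sum at a primary prime `π`:
`g(π) = (-1/π)₄ · N(π)^{1/2}`. -/
theorem gauss_sum_at_prime (π : GaussianInt) (hp : Prime π) (hprimary : IsPrimary π) :
    quadGaussSum π = toComplex (quarticSymbol (-1) π) * Real.sqrt (gnorm π) := by
  have hN1 := one_lt_gnorm hp
  have hdvd : π ∣ ((gnorm π : ℕ) : GaussianInt) := by
    refine ⟨star π, ?_⟩
    rw [← Zsqrtd.norm_eq_mul_conj, ← abs_natCast_norm, gnorm]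
    simp
  -- some rational prime is divisible by `π`
  obtain ⟨p, hP, hpd⟩ : ∃ p : ℕ, p.Prime ∧ π ∣ (p : GaussianInt) := by
    rw [← Nat.prod_primeFactorsList (n := gnorm π) (by omega), Nat.cast_list_prod,
      hp.dvd_prod_iff] at hdvd
    obtain ⟨x, hx, hd⟩ := hdvd
    obtain ⟨p, hpm, rfl⟩ := List.mem_map.1 hx
    exact ⟨p, Nat.prime_of_mem_primeFactorsList hpm, hd⟩
  have hpn : gnorm (p : GaussianInt) = p ^ 2 := by
    zify
    rw [gnorm_eq]
    simp
  have h2 := gnorm_dvd hpd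
  rw [hpn, Nat.dvd_prime_pow hP] at h2
  obtain ⟨k, hk, hkp⟩ := h2
  interval_cases k
  · rw [pow_zero] at hkp
    omega
  · exact gauss_split hp hprimary (by rwa [hkp, pow_one])
  obtain ⟨κ, hκ⟩ := hpd
  have hκ1 : IsUnit κ := by
    rw [← Zsqrtd.norm_eq_one_iff]
    have h3 := hpn
    rw [hκ, gnorm, Zsqrtd.norm_mul, Int.natAbs_mul] at h3
    change gnorm π * _ = _ at h3
    rw [hkp] at h3
    exact Nat.eq_of_mul_eq_mul_left (pow_pos hP.pos 2) (by rw [h3, mul_one])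
  obtain ⟨h4, h5⟩ := primary_arith hprimary
  have hre := congrArg Zsqrtd.re hκ
  have him := congrArg Zsqrtd.im hκ
  simp only [Zsqrtd.re_natCast, Zsqrtd.im_natCast, Zsqrtd.re_mul, Zsqrtd.im_mul] at hre him
  -- a unit multiple `±i p` is excluded, since the imaginary part of `π` is even
  rcases unit_cases hκ1 with rfl | rfl | rfl | rfl
  · refine gauss_inert hp hprimary hP (Or.inl rfl) ?_ ?_ <;> simp at hre him <;> omega
  · refine gauss_inert hp hprimary hP (Or.inr rfl) ?_ ?_ <;> simp at hre him <;> omega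
  all_goals
    simp [gi] at hre him
    omega

end
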